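/- arXiv:2206.09911 — 6 statements merged into one kernel-verified Lean document; each statement's English description precedes it below -/
import Mathlib

section
/- Let F be a finite-dimensional real normed space and let X, D, J : F → F be C² vector fields and c ∈ ℝ. If [D, X] = c • X pointwise and [X, J] = 0 pointwise, then [X, [D, J]] = 0 pointwise. (In particular, a dynamical similarity D with constant rescaling factor maps the generator J of a conserved quantity of the flow of X to another generator of a conserved quantity.) -/
/-- A dynamical similarity `D` (with constant rescaling factor `c`, `[D, X] = c • X`) maps the
generator `J` of a conserved quantity of the flow of `X` (`[X, J] = 0`) to another generator of a
conserved quantity: `[X, [D, J]] = 0`.  Here `[V, W](x) = (fderiv ℝ W x)(V x) − (fderiv ℝ V x)(W x)`. -/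
theorem stmt1 {F : Type*} [NormedAddCommGroup F] [NormedSpace ℝ F] [FiniteDimensional ℝ F]
    (X D J : F → F) (hX : ContDiff ℝ 2 X) (hD : ContDiff ℝ 2 D) (hJ : ContDiff ℝ 2 J) (c : ℝ)
    (hDX : ∀ x, fderiv ℝ X x (D x) - fderiv ℝ D x (X x) = c • X x)
    (hXJ : ∀ x, fderiv ℝ J x (X x) - fderiv ℝ X x (J x) = 0) :
    ∀ x, fderiv ℝ (fun y => fderiv ℝ J y (D y) - fderiv ℝ D y (J y)) x (X x)
        - fderiv ℝ X x (fderiv ℝ J x (D x) - fderiv ℝ D x (J x)) = 0 := by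
  intro x
  have hXD' : VectorField.lieBracket ℝ X D = (-c) • X := by
    ext y
    rw [VectorField.lieBracket_swap, VectorField.lieBracket, hDX y]
    simp
  have hXJ' : VectorField.lieBracket ℝ X J = 0 := funext hXJ
  -- Jacobi identity: `[X, [D, J]] = [[X, D], J] + [D, [X, J]] = -c • [X, J] + [D, 0] = 0`.
  have h := VectorField.leibniz_identity_lieBracket (𝕜 := ℝ) (n := 2) (by simp)
    (hX.contDiffAt (x := x)) hD.contDiffAt hJ.contDiffAt
  rw [hXD', hXJ', VectorField.lieBracket_const_smul_left (hX.differentiable (by simp) x),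
    hXJ'] at h
  simpa [VectorField.lieBracket_eq] using h
end

section
/- Let F be a finite-dimensional real normed space, let D, X : F → F be C¹ vector fields, let Λ ∈ ℝ, and let ρ : F → ℝ be C¹ with ρ x > 0 for all x. If [D, X] = (Λ − 1) • X pointwise and (fderiv ℝ ρ x)(D x) = ρ x for all x (i.e. ρ is a scaling function for D), then the rescaled vector field x ↦ (ρ x)^{1−Λ} • X x commutes with D: [D, ρ^{1−Λ} • X] = 0 pointwise (real power Real.rpow). -/
/-- If `[D, X] = (Λ − 1) • X` and `ρ` is a (positive) scaling function for `D`
(`dρ(D) = ρ`), then the rescaled vector field `ρ^{1−Λ} • X` commutes with `D`: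
`[D, ρ^{1−Λ} • X] = 0` (real power).  Here `[V, W](x) = (fderiv ℝ W x)(V x) − (fderiv ℝ V x)(W x)`. -/
theorem stmt4 {F : Type*} [NormedAddCommGroup F] [NormedSpace ℝ F] [FiniteDimensional ℝ F]
    (D X : F → F) (hD : ContDiff ℝ 1 D) (hX : ContDiff ℝ 1 X) (Λ : ℝ)
    (ρ : F → ℝ) (hρ : ContDiff ℝ 1 ρ) (hρpos : ∀ x, 0 < ρ x)
    (hDX : ∀ x, fderiv ℝ X x (D x) - fderiv ℝ D x (X x) = (Λ - 1) • X x)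
    (hρD : ∀ x, fderiv ℝ ρ x (D x) = ρ x) :
    ∀ x, fderiv ℝ (fun y => (ρ y) ^ (1 - Λ) • X y) x (D x)
        - fderiv ℝ D x ((ρ x) ^ (1 - Λ) • X x) = 0 := by
  intro x
  have hρx : DifferentiableAt ℝ ρ x := hρ.differentiable one_ne_zero x
  have hpow := hρx.hasFDerivAt.rpow_const (p := 1 - Λ) (Or.inl (hρpos x).ne')
  have hXx : DifferentiableAt ℝ X x := hX.differentiable one_ne_zero x
  -- The factor `ρ ^ (1 - Λ)` is homogeneous of degree `1 - Λ` along `D`.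
  have hpowD : fderiv ℝ (fun y => ρ y ^ (1 - Λ)) x (D x) = (1 - Λ) * ρ x ^ (1 - Λ) := by
    rw [hpow.fderiv, smul_apply, hρD x, smul_eq_mul, mul_assoc,
      ← Real.rpow_add_one (hρpos x).ne', sub_add_cancel]
  -- By the product rule `[D, f • X] = df(D) • X + f • [D, X]`, the two degrees cancel.
  have hprod := VectorField.lieBracket_smul_right (V := D) hpow.differentiableAt hXx
  rw [VectorField.lieBracket, VectorField.lieBracket, hDX x, hpowD] at hprod
  rw [hprod]
  module
end

section
/- Let I be an open interval and q, p : I → ℂ differentiable with q t ≠ 0 for all t ∈ I, satisfying the Kepler equations: HasDerivAt q (p t) t and HasDerivAt p (−‖q t‖⁻³ • q t) t for all t ∈ I. Define the scale-invariant quantities J̃ t := ⟪p t, q t⟫ / ‖q t‖^{1/2} and G̃ t := ⟪p t, Complex.I * q t⟫ / ‖q t‖^{1/2}, and set 𝓗₀ t := 1 − (J̃ t ² + G̃ t ²)/2. Then for all t ∈ I: HasDerivAt J̃ ( ‖q t‖^{−3/2} · ( (G̃ t)²/2 − 𝓗₀ t ) ) t and HasDerivAt G̃ ( −‖q t‖^{−3/2}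 · (J̃ t · G̃ t)/2 ) t. -/
/-!
Write `r = ‖q‖`, `J = ⟪p, q⟫`, `G = ⟪p, i q⟫`. The Kepler equations give `r' = J / r`,
`J' = ‖p‖² - 1 / r` and `G' = 0` (conservation of angular momentum). Both claims follow from the
quotient rule for `J / √r` and `G / √r`, using the Lagrange identity `r² ‖p‖² = J² + G²` for the
first one.
-/

noncomputable section

/-- Real inner product on `ℂ ≅ ℝ²`: `⟪z, w⟫ = z.re * w.re + z.im * w.im`. -/
def rinn (z w : ℂ) : ℝ := z.re * w.re + z.im * w.im

/-- Scale-invariant quantity `J̃ = ⟪p, q⟫ / ‖q‖^{1/2}` (real power). -/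
def Jt (q p : ℝ → ℂ) (t : ℝ) : ℝ := rinn (p t) (q t) / ‖q t‖ ^ ((1 : ℝ) / 2)

/-- Scale-invariant quantity `G̃ = ⟪p, i q⟫ / ‖q‖^{1/2}` (real power). -/
def Gt (q p : ℝ → ℂ) (t : ℝ) : ℝ := rinn (p t) (Complex.I * q t) / ‖q t‖ ^ ((1 : ℝ) / 2)

/-- Reduced contact Hamiltonian `𝓗₀ = 1 − (J̃² + G̃²)/2`. -/
def H0red (q p : ℝ → ℂ) (t : ℝ) : ℝ := 1 - ((Jt q p t) ^ 2 + (Gt q p t) ^ 2) / 2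

/-- The derivative of `√r = ‖q‖^{1/2}` along a curve is `⟪q', q⟫ / (2 r √r)`. -/
lemma hasDerivAt_sqrt_norm {q : ℝ → ℂ} {v : ℂ} {t : ℝ} (h0 : q t ≠ 0) (hq : HasDerivAt q v t) :
    HasDerivAt (fun s => √‖q s‖) (rinn v (q t) / (2 * ‖q t‖ * √‖q t‖)) t := by
  have hr : 0 < ‖q t‖ := norm_pos_iff.mpr h0
  have hn : HasDerivAt (fun s => ‖q s‖) (rinn v (q t) / ‖q t‖) t := by
    have h := (hq.norm_sq).sqrt (by positivity)
    simp only [Real.sqrt_sq (norm_nonneg _)] at h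
    refine h.congr_deriv ?_
    simp only [Complex.inner, rinn, Complex.mul_re, Complex.conj_re, Complex.conj_im]
    field_simp
    ring
  refine (hn.sqrt hr.ne').congr_deriv ?_
  field_simp

/-- Example 5 (contact-reduced Kepler): along a Kepler solution the scale-invariant quantities
`J̃`, `G̃` satisfy the scale-reduced equations of motion (in the original time `t`):
`J̃' = ‖q‖^{−3/2} (G̃²/2 − 𝓗₀)` and `G̃' = −‖q‖^{−3/2} J̃ G̃ / 2`. -/
theorem stmt12 (I : Set ℝ) (hI : IsOpen I) (q p : ℝ → ℂ)
    (hq0 : ∀ t ∈ I, q t ≠ 0)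
    (hq : ∀ t ∈ I, HasDerivAt q (p t) t)
    (hp : ∀ t ∈ I, HasDerivAt p ((-(‖q t‖ ^ 3)⁻¹) • q t) t) :
    ∀ t ∈ I,
      HasDerivAt (Jt q p)
        (‖q t‖ ^ (-(3 : ℝ) / 2) * ((Gt q p t) ^ 2 / 2 - H0red q p t)) t
      ∧ HasDerivAt (Gt q p)
        (-(‖q t‖ ^ (-(3 : ℝ) / 2)) * (Jt q p t * Gt q p t) / 2) t := by
  intro t ht
  have hr : 0 < ‖q t‖ := norm_pos_iff.mpr (hq0 t ht)
  have hs : 0 < √‖q t‖ := Real.sqrt_pos.mpr hr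
  have hss : √‖q t‖ ^ 2 = ‖q t‖ := Real.sq_sqrt hr.le
  have hD := hasDerivAt_sqrt_norm (hq0 t ht) (hq t ht)
  have hqre := Complex.reCLM.hasFDerivAt.comp_hasDerivAt t (hq t ht)
  have hqim := Complex.imCLM.hasFDerivAt.comp_hasDerivAt t (hq t ht)
  have hpre := Complex.reCLM.hasFDerivAt.comp_hasDerivAt t (hp t ht)
  have hpim := Complex.imCLM.hasFDerivAt.comp_hasDerivAt t (hp t ht)
  have hnorm : (q t).re ^ 2 + (q t).im ^ 2 = ‖q t‖ ^ 2 := by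
    rw [Complex.sq_norm, Complex.normSq_apply]; ring
  have hpow : ‖q t‖ ^ (-(3 : ℝ) / 2) = (√‖q t‖ ^ 3)⁻¹ := by
    rw [Real.sqrt_eq_rpow, ← Real.rpow_natCast, ← Real.rpow_mul hr.le, ← Real.rpow_neg hr.le]
    norm_num
  have hJ : HasDerivAt (fun s => rinn (p s) (q s))
      ((p t).re ^ 2 + (p t).im ^ 2 - 1 / ‖q t‖) t := by
    refine ((hpre.mul hqre).add (hpim.mul hqim)).congr_deriv ?_
    simp only [map_smul, smul_eq_mul, Complex.reCLM_apply, Complex.imCLM_apply, Function.comp_apply]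
    field_simp
    linear_combination (-1) * hnorm
  have hG : HasDerivAt (fun s => rinn (p s) (Complex.I * q s)) 0 t := by
    have h := ((hpim.mul hqre).sub (hpre.mul hqim)).congr_deriv (g' := 0) (by
      simp only [map_smul, smul_eq_mul, Complex.reCLM_apply, Complex.imCLM_apply, Function.comp_apply]
      ring)
    refine h.congr_of_eventuallyEq (.of_forall fun s => ?_)
    simp [rinn]
    ring
  have eJ : Jt q p = fun s => rinn (p s) (q s) / √‖q s‖ := by
    funext s; rw [Jt, Real.sqrt_eq_rpow]
  have eG : Gt q p = fun s => rinn (p s) (Complex.I * q s) / √‖q s‖ := by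
    funext s; rw [Gt, Real.sqrt_eq_rpow]
  have hLag : ‖q t‖ ^ 2 * ((p t).re ^ 2 + (p t).im ^ 2)
      = rinn (p t) (q t) ^ 2 + rinn (p t) (Complex.I * q t) ^ 2 := by
    rw [← hnorm]; simp [rinn]; ring
  rw [H0red, hpow, eJ, eG]
  -- With `r = (√r)²` substituted, both claims are rational identities in `√r`, `J`, `G`, `‖p‖²`.
  constructor
  · refine (hJ.div hD hs.ne').congr_deriv ?_
    beta_reduce
    generalize rinn (p t) (Complex.I * q t) = G at *
    generalize rinn (p t) (q t) = J at *
    generalize (p t).re ^ 2 + (p t).im ^ 2 = P at *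
    generalize √‖q t‖ = s at *
    rw [← hss] at hLag ⊢
    field_simp
    linear_combination 2 * hLag
  · refine (hG.div hD hs.ne').congr_deriv ?_
    beta_reduce
    generalize rinn (p t) (Complex.I * q t) = G at *
    generalize rinn (p t) (q t) = J at *
    generalize √‖q t‖ = s at *
    rw [← hss]
    field_simp
    ring
end
end

section
/- Let q, p : ℝ → ℂ be differentiable with q t ≠ 0 for all t, satisfying the Kepler equations: HasDerivAt q (p t) t and HasDerivAt p (−‖q t‖⁻³ • q t) t for all t. Suppose the solution is T-periodic for some T > 0: q (t + T) = q t and p (t + T) = p t for all t. Let E := ‖p 0‖²/2 − ‖q 0‖⁻¹ be the energy. Then the action over one period satisfies ∫ t in Set.Ioc 0 T, (‖p t‖²/2 + ‖q t‖⁻¹) = −3 · T · E. -/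
/-!
Along a solution the energy `E = ‖p‖²/2 − ‖q‖⁻¹` is constant (`kepler_energy_eq`), and the virial
function `⟪q, p⟫` has derivative `‖p‖² − ‖q‖⁻¹` (`kepler_virial_hasDerivAt`). Since
`‖p‖²/2 + ‖q‖⁻¹ = 2 (‖p‖² − ‖q‖⁻¹) − 3 E`, the Lagrangian has the antiderivative
`2 ⟪q, p⟫ − 3 E t`. The first term is `T`-periodic, so only `−3 E T` survives over a period.
-/

open MeasureTheory

theorem kepler_energy_eq (q p : ℝ → ℂ) (hq0 : ∀ t, q t ≠ 0)
    (hq : ∀ t, HasDerivAt q (p t) t)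
    (hp : ∀ t, HasDerivAt p ((-(‖q t‖ ^ 3)⁻¹) • q t) t) (t : ℝ) :
    ‖p t‖ ^ 2 / 2 - ‖q t‖⁻¹ = ‖p 0‖ ^ 2 / 2 - ‖q 0‖⁻¹ := by
  have hnorm : ∀ t, HasDerivAt (fun s => ‖q s‖) (inner ℝ (q t) (p t) / ‖q t‖) t := by
    intro t
    have hr : ‖q t‖ ≠ 0 := norm_ne_zero_iff.mpr (hq0 t)
    -- The norm is differentiated as the square root of its square.
    have h := (hq t).norm_sq.sqrt (pow_ne_zero 2 hr)
    simp only [Real.sqrt_sq (norm_nonneg _)] at h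
    convert h using 1
    field_simp
  have hE : ∀ t, HasDerivAt (fun s => ‖p s‖ ^ 2 / 2 - ‖q s‖⁻¹) 0 t := by
    intro t
    have hr : ‖q t‖ ≠ 0 := norm_ne_zero_iff.mpr (hq0 t)
    refine (((hp t).norm_sq.div_const 2).sub ((hnorm t).fun_inv hr)).congr_deriv ?_
    rw [real_inner_smul_right, real_inner_comm (q t) (p t)]
    field_simp
    ring
  exact is_const_of_deriv_eq_zero (fun s => (hE s).differentiableAt) (fun s => (hE s).deriv) t 0

theorem kepler_virial_hasDerivAt (q p : ℝ → ℂ) (hq0 : ∀ t, q t ≠ 0)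
    (hq : ∀ t, HasDerivAt q (p t) t)
    (hp : ∀ t, HasDerivAt p ((-(‖q t‖ ^ 3)⁻¹) • q t) t) (t : ℝ) :
    HasDerivAt (fun s => inner ℝ (q s) (p s)) (‖p t‖ ^ 2 - ‖q t‖⁻¹) t := by
  have hr : ‖q t‖ ≠ 0 := norm_ne_zero_iff.mpr (hq0 t)
  refine ((hq t).inner ℝ (hp t)).congr_deriv ?_
  rw [real_inner_smul_right, real_inner_self_eq_norm_sq, real_inner_self_eq_norm_sq]
  field_simp
  ring

/-- Section III.B: the action of a `T`-periodic Kepler orbit over one period equals `−3·T·E`,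
where `E = ‖p 0‖²/2 − ‖q 0‖⁻¹` is the (conserved) energy. -/
theorem stmt14 (q p : ℝ → ℂ) (hq0 : ∀ t, q t ≠ 0)
    (hq : ∀ t, HasDerivAt q (p t) t)
    (hp : ∀ t, HasDerivAt p ((-(‖q t‖ ^ 3)⁻¹) • q t) t)
    (T : ℝ) (hT : 0 < T)
    (hqper : ∀ t, q (t + T) = q t) (hpper : ∀ t, p (t + T) = p t) :
    ∫ t in Set.Ioc (0 : ℝ) T, (‖p t‖ ^ 2 / 2 + ‖q t‖⁻¹) =
      -3 * T * (‖p 0‖ ^ 2 / 2 - ‖q 0‖⁻¹) := by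
  have hqc : Continuous q := continuous_iff_continuousAt.mpr fun t => (hq t).continuousAt
  have hpc : Continuous p := continuous_iff_continuousAt.mpr fun t => (hp t).continuousAt
  have hLc : Continuous fun t => ‖p t‖ ^ 2 / 2 + ‖q t‖⁻¹ :=
    ((hpc.norm.pow 2).div_const 2).add
      (hqc.norm.inv₀ fun t => norm_ne_zero_iff.mpr (hq0 t))
  have hF : ∀ t, HasDerivAt
      (fun s => 2 * inner ℝ (q s) (p s) - 3 * (‖p 0‖ ^ 2 / 2 - ‖q 0‖⁻¹) * s)
      (‖p t‖ ^ 2 / 2 + ‖q t‖⁻¹) t := by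
    intro t
    refine (((kepler_virial_hasDerivAt q p hq0 hq hp t).const_mul 2).sub
      ((hasDerivAt_id t).const_mul (3 * (‖p 0‖ ^ 2 / 2 - ‖q 0‖⁻¹)))).congr_deriv ?_
    linarith [kepler_energy_eq q p hq0 hq hp t]
  have hq1 : q T = q 0 := by simpa using hqper 0
  have hp1 : p T = p 0 := by simpa using hpper 0
  rw [← intervalIntegral.integral_of_le hT.le,
    intervalIntegral.integral_eq_sub_of_hasDerivAt (fun t _ => hF t)
      (hLc.intervalIntegrable 0 T), hq1, hp1]
  ring
end

section
/- There is no function S : ℂ × ℂ → ℝ such that, for every (q, p) ∈ ℂ × ℂ with q ≠ 0, S is differentiable at (q, p) and (fderiv ℝ S (q, p)) (p, −‖q‖⁻³ • q) = ‖p‖²/2 + ‖q‖⁻¹. In other words, there is no globally defined function on the Kepler phase space whose derivative along the Kepler Hamiltonian vector field equals the Lagrangian. -/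
/-! Along the circular orbit `t ↦ (e^{it}, i e^{it})` the Lagrangian is constantly `3/2`, so `S`
restricted to this orbit would be a `2π`-periodic function with derivative `3/2` everywhere, which
Rolle's theorem forbids. -/

/-- The position and momentum of the circular orbit satisfy `q' = p`, `p' = -q`. Since `‖q‖ = 1`,
these are Hamilton's equations of the Kepler problem. -/
lemma hasDerivAt_circularOrbit (t : ℝ) :
    HasDerivAt (fun s : ℝ => (Complex.exp (s * Complex.I), Complex.I * Complex.exp (s * Complex.I)))
      (Complex.I * Complex.exp (t * Complex.I), -Complex.exp (t * Complex.I)) t := by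
  have h : HasDerivAt (fun s : ℝ => Complex.exp (s * Complex.I))
      (Complex.I * Complex.exp (t * Complex.I)) t := by
    have h1 : HasDerivAt (fun s : ℝ => (s : ℂ) * Complex.I) (1 * Complex.I) t :=
      (Complex.ofRealCLM.hasDerivAt (x := t)).mul_const Complex.I
    simpa [mul_comm] using h1.cexp
  refine h.prodMk ?_
  have h2 := h.const_mul Complex.I
  rwa [← mul_assoc, Complex.I_mul_I, neg_one_mul] at h2

/-- Section III.B: there is no globally defined function `S` on the Kepler phase space
`{(q, p) ∈ ℂ × ℂ : q ≠ 0}` whose derivative along the Kepler Hamiltonian vector field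
`X_{H_K}(q, p) = (p, −‖q‖⁻³ q)` equals the Lagrangian `L(q, p) = ‖p‖²/2 + ‖q‖⁻¹`. -/
theorem stmt15 :
    ¬ ∃ S : ℂ × ℂ → ℝ, ∀ q p : ℂ, q ≠ 0 →
      DifferentiableAt ℝ S (q, p) ∧
      fderiv ℝ S (q, p) (p, (-(‖q‖ ^ 3)⁻¹) • q) = ‖p‖ ^ 2 / 2 + ‖q‖⁻¹ := by
  rintro ⟨S, hS⟩
  have hg : ∀ t : ℝ, HasDerivAt
      (fun s : ℝ => S (Complex.exp (s * Complex.I), Complex.I * Complex.exp (s * Complex.I)))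
      (3 / 2) t := by
    intro t
    obtain ⟨hd, he⟩ := hS (Complex.exp (t * Complex.I)) (Complex.I * Complex.exp (t * Complex.I))
      (Complex.exp_ne_zero _)
    have hc := hd.hasFDerivAt.comp_hasDerivAt t (hasDerivAt_circularOrbit t)
    simp only [norm_mul, Complex.norm_I, Complex.norm_exp_ofReal_mul_I, one_pow, inv_one, mul_one,
      neg_smul, one_smul] at he
    rw [he, show (1 / 2 + 1 : ℝ) = 3 / 2 by norm_num] at hc
    exact hc
  obtain ⟨c, -, hc⟩ := exists_hasDerivAt_eq_zero (f' := fun _ => (3 / 2 : ℝ)) Real.two_pi_pos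
    (fun t _ => (hg t).continuousAt.continuousWithinAt)
    (by simp [Complex.exp_two_pi_mul_I]) (fun t _ => hg t)
  norm_num at hc
end

section
/- Let k ∈ ℝ and let r, θ : I → ℝ be twice differentiable on an open interval I with r t > 0 for all t, satisfying the polar equations of motion of the planar harmonic oscillator: r'' = r·(θ')² − k·r and (r²·θ')' = 0 on I. Define S := −r'/(2r). Then (θ, S) satisfies the Herglotz–Lagrange equations of the contact Lagrangian 𝓛(θ, θ̇, S) = 2S² + (k − θ̇²)/2: for all t ∈ I, S'(t) = 2·(S t)² + (k − (θ'(t))²)/2 and θ''(t) = 4·(S t)·θ'(t). -/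
/-- Example 14: the scale reduction of the planar harmonic oscillator.  If `(r, θ)` solves the
polar Euler–Lagrange equations `r'' = r (θ')² − k r`, `(r² θ')' = 0` on an open interval `I`
with `r > 0`, then `S := −r'/(2r)` and `θ` satisfy the Herglotz–Lagrange equations of the
contact Lagrangian `𝓛(θ, θ̇, S) = 2S² + (k − θ̇²)/2`:
`S' = 2S² + (k − (θ')²)/2` and `θ'' = 4 S θ'`. -/
theorem stmt17 (k : ℝ) (I : Set ℝ) (hI : IsOpen I) (r θ : ℝ → ℝ)
    (hrpos : ∀ t ∈ I, 0 < r t)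
    (hr : ∀ t ∈ I, DifferentiableAt ℝ r t)
    (hθ : ∀ t ∈ I, DifferentiableAt ℝ θ t)
    (heom1 : ∀ t ∈ I, HasDerivAt (deriv r) (r t * (deriv θ t) ^ 2 - k * r t) t)
    (heom2 : ∀ t ∈ I, HasDerivAt (fun s => (r s) ^ 2 * deriv θ s) 0 t) :
    ∀ t ∈ I,
      HasDerivAt (fun s => -(deriv r s) / (2 * r s))
        (2 * (-(deriv r t) / (2 * r t)) ^ 2 + (k - (deriv θ t) ^ 2) / 2) t
      ∧ HasDerivAt (deriv θ) (4 * (-(deriv r t) / (2 * r t)) * deriv θ t) t := by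
  intro t ht
  have hne : r t ≠ 0 := (hrpos t ht).ne'
  have hrt : HasDerivAt r (deriv r t) t := (hr t ht).hasDerivAt
  constructor
  · have h := (heom1 t ht).neg.fun_div (hrt.const_mul 2) (mul_ne_zero two_ne_zero hne)
    refine h.congr_deriv ?_
    simp only [Pi.neg_apply]
    field_simp
    ring
  · -- Differentiability of `θ'` is not assumed: it follows from `θ' = (r² θ') / r²` near `t`,
    -- a quotient of differentiable functions.
    have h := (heom2 t ht).fun_div (hrt.fun_pow 2) (pow_ne_zero 2 hne)
    have heq : deriv θ =ᶠ[nhds t] fun s => (r s) ^ 2 * deriv θ s / (r s) ^ 2 := by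
      filter_upwards [hI.mem_nhds ht] with s hs
      have hs' : r s ≠ 0 := (hrpos s hs).ne'
      field_simp
    refine (h.congr_of_eventuallyEq heq).congr_deriv ?_
    field_simp
    ring
end
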